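/- Let x > 0 and let k be a natural number. If k is odd, then ∫_{−x/2}^{x/2} s^k {x choose x/2 + s} ds = 0. If k is even, then (1/(2(e^x − 1))) ∫_{−x/2}^{x/2} s^k {x choose x/2 + s} ds = (1/(e^x − 1)) [ (x/2)^{(k+1)/2} Γ((k+1)/2) ( I_{(k+1)/2}(x) + I_{(k−1)/2}(x) ) − (x/2)^k ], i.e. these are the moments of the symmetric continuous binomial distribution. -/

import Mathlib

/-- The continuous binomial coefficient `{x choose s}`. -/
noncomputable def cbinom (x s : ℝ) : ℝ :=
  ∑' n : ℕ, (s * (x - s)) ^ n *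
    (2 / ((n.factorial : ℝ)) ^ 2 + x / ((n.factorial : ℝ) * ((n + 1).factorial : ℝ)))

/-- The modified Bessel function of the first kind of real order `ν`. -/
noncomputable def besselI (ν : ℝ) (z : ℝ) : ℝ :=
  ∑' n : ℕ, (z / 2) ^ (2 * (n : ℝ) + ν) / ((n.factorial : ℝ) * Real.Gamma ((n : ℝ) + ν + 1))

/-!
Centred at `x / 2`, the continuous binomial coefficient is an entire power series in
`(x / 2) ^ 2 - s ^ 2`, so its moments are obtained by integrating termwise. Odd moments vanish by
symmetry. For even `k`, integration by parts evaluates `∫ s ^ k * (a ^ 2 - s ^ 2) ^ n` over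
`[-a, a]` in terms of the Gamma function, and with `ν = (k + 1) / 2` the two summands of the `n`-th
coefficient of `cbinom` become the `n`-th term of the series for `I_ν` and the `(n + 1)`-st term of
the series for `I_{ν - 1}`. The subtracted `(x / 2) ^ k` is the missing zeroth term of the latter.
-/

open Filter MeasureTheory Topology
open scoped Interval Nat

section Integrals

theorem intervalIntegral_eq_zero_of_odd {E : Type*} [NormedAddCommGroup E] [NormedSpace ℝ E]
    {f : ℝ → E} (hf : f.Odd) (a : ℝ) : ∫ s in (-a)..a, f s = 0 := by
  have h : -∫ s in (-a)..a, f s = ∫ s in (-a)..a, f s := by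
    simpa only [hf _, intervalIntegral.integral_neg, neg_neg] using
      intervalIntegral.integral_comp_neg (a := -a) (b := a) f
  have := IsAddTorsionFree.of_isTorsionFree ℝ E
  exact self_eq_neg.mp h.symm

theorem hasSum_intervalIntegral_mul_tsum_pow {𝕜 : Type*} [RCLike 𝕜] {μ : Measure ℝ} {a b : ℝ}
    {f g : ℝ → 𝕜} {c : ℕ → 𝕜} (hf : IntervalIntegrable f μ a b) (hg : ContinuousOn g [[a, b]])
    (hc : ∀ r : 𝕜, Summable fun n => r ^ n * c n) :
    HasSum (fun n => (∫ s in a..b, f s * g s ^ n ∂μ) * c n)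
      (∫ s in a..b, f s * ∑' n, g s ^ n * c n ∂μ) := by
  obtain ⟨R, hR⟩ := isCompact_uIcc.exists_bound_of_continuousOn hg
  have majorant_summable : Summable fun n => R ^ n * ‖c n‖ := by
    refine .of_norm ?_
    simpa using (hc (R : 𝕜)).norm
  have term_norm_le (n : ℕ) (s : ℝ) (hs : s ∈ Ι a b) :
      ‖f s * (g s ^ n * c n)‖ ≤ ‖f s‖ * (R ^ n * ‖c n‖) := by
    rw [norm_mul, norm_mul, norm_pow]
    gcongr
    exact hR s (Set.uIoc_subset_uIcc hs)
  simp only [← intervalIntegral.integral_mul_const, mul_assoc]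
  refine intervalIntegral.hasSum_integral_of_dominated_convergence
    (fun n s => ‖f s‖ * (R ^ n * ‖c n‖)) (fun n => ?_)
    (fun n => .of_forall (term_norm_le n)) (.of_forall fun s _ => majorant_summable.mul_left _) ?_
    (.of_forall fun s _ => (hc (g s)).hasSum.mul_left (f s))
  · have hg_meas : AEStronglyMeasurable g (μ.restrict (Ι a b)) :=
      (hg.mono Set.uIoc_subset_uIcc).aestronglyMeasurable measurableSet_uIoc
    exact (intervalIntegrable_iff.mp hf).aestronglyMeasurable.mul ((hg_meas.pow n).mul_const (c n))
  · simpa only [tsum_mul_left] using hf.norm.mul_const _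

theorem integral_pow_mul_sq_sub_sq_pow_succ (a : ℝ) (k n : ℕ) :
    ∫ s in (-a)..a, s ^ k * (a ^ 2 - s ^ 2) ^ (n + 1) =
      2 * (n + 1) / (k + 1) * ∫ s in (-a)..a, s ^ (k + 2) * (a ^ 2 - s ^ 2) ^ n := by
  have hasDerivAt_weight (s : ℝ) : HasDerivAt (fun s => (a ^ 2 - s ^ 2) ^ (n + 1))
      (-(2 * (n + 1)) * (s * (a ^ 2 - s ^ 2) ^ n)) s := by
    refine (((hasDerivAt_pow 2 s).const_sub (a ^ 2)).fun_pow (n + 1)).congr_deriv ?_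
    push_cast [Nat.add_sub_cancel]
    ring
  have hasDerivAt_monomial (s : ℝ) : HasDerivAt (fun s => s ^ (k + 1) / (k + 1 : ℝ)) (s ^ k) s := by
    refine ((hasDerivAt_pow (k + 1) s).div_const (k + 1 : ℝ)).congr_deriv ?_
    rw [Nat.cast_succ, Nat.add_sub_cancel, mul_div_cancel_left₀ _ (by positivity)]
  have by_parts := intervalIntegral.integral_mul_deriv_eq_deriv_mul (a := -a) (b := a)
    (fun s _ => hasDerivAt_weight s) (fun s _ => hasDerivAt_monomial s)
    (Continuous.intervalIntegrable (by fun_prop) _ _)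
    (Continuous.intervalIntegrable (by fun_prop) _ _)
  simp only [neg_sq, sub_self, zero_pow n.succ_ne_zero, zero_mul, zero_sub] at by_parts
  simp only [mul_comm (_ ^ k)]
  rw [by_parts, ← intervalIntegral.integral_neg, ← intervalIntegral.integral_const_mul]
  congr with s
  ring

theorem integral_pow_mul_sq_sub_sq_pow (a : ℝ) {k : ℕ} (hk : Even k) (n : ℕ) :
    ∫ s in (-a)..a, s ^ k * (a ^ 2 - s ^ 2) ^ n =
      a ^ (2 * n + k + 1) * Real.Gamma ((k + 1) / 2) * n ! / Real.Gamma (n + (k + 1) / 2 + 1) := by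
  induction n generalizing k with
  | zero =>
    have hGamma : Real.Gamma ((k + 1 : ℝ) / 2) ≠ 0 := (Real.Gamma_pos_of_pos (by positivity)).ne'
    have hGamma_succ : Real.Gamma ((k + 1 : ℝ) / 2 + 1) = (k + 1) / 2 * Real.Gamma ((k + 1) / 2) :=
      Real.Gamma_add_one (by positivity)
    simp only [pow_zero, mul_one, integral_pow, hk.add_one.neg_pow, mul_zero, zero_add,
      Nat.factorial_zero, Nat.cast_zero, Nat.cast_one, hGamma_succ]
    field_simp
    ring
  | succ n ih =>
    have hGamma_succ : Real.Gamma (((k + 2 : ℕ) + 1 : ℝ) / 2) =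
        (k + 1) / 2 * Real.Gamma ((k + 1) / 2) := by
      rw [← Real.Gamma_add_one (by positivity)]
      push_cast
      ring_nf
    have hGamma_arg : (n + ((k + 2 : ℕ) + 1) / 2 + 1 : ℝ) = (n + 1 : ℕ) + (k + 1) / 2 + 1 := by
      push_cast
      ring
    rw [integral_pow_mul_sq_sub_sq_pow_succ, ih (hk.add even_two), hGamma_succ, hGamma_arg,
      Nat.factorial_succ]
    push_cast
    field_simp
    ring

end Integrals

section Bessel

/-- The `n`-th term of the power series defining the modified Bessel function `besselI ν z`. -/
noncomputable def besselITerm (ν z : ℝ) (n : ℕ) : ℝ :=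
  (z / 2) ^ (2 * (n : ℝ) + ν) / (n ! * Real.Gamma (n + ν + 1))

variable {z : ℝ}

theorem besselITerm_pos (hz : 0 < z) {ν : ℝ} {n : ℕ} (hn : 0 < n + ν + 1) :
    0 < besselITerm ν z n :=
  div_pos (Real.rpow_pos_of_pos (half_pos hz) _)
    (mul_pos (by positivity) (Real.Gamma_pos_of_pos hn))

theorem besselITerm_succ (hz : 0 < z) {ν : ℝ} {n : ℕ} (hn : n + ν + 1 ≠ 0) :
    besselITerm ν z (n + 1) =
      (z / 2) ^ 2 / ((n + 1) * (n + ν + 1)) * besselITerm ν z n := by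
  have rpow_succ : (z / 2) ^ (2 * ((n + 1 : ℕ) : ℝ) + ν) =
      (z / 2) ^ 2 * (z / 2) ^ (2 * (n : ℝ) + ν) := by
    rw [← Real.rpow_natCast, ← Real.rpow_add (half_pos hz)]
    push_cast
    ring_nf
  have hGamma_succ : Real.Gamma ((n + 1 : ℕ) + ν + 1) = (n + ν + 1) * Real.Gamma (n + ν + 1) := by
    rw [← Real.Gamma_add_one hn]
    push_cast
    ring_nf
  rw [besselITerm, besselITerm, rpow_succ, hGamma_succ, Nat.factorial_succ]
  push_cast
  rw [div_mul_div_comm]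
  ring_nf

theorem summable_besselITerm (hz : 0 < z) (ν : ℝ) : Summable (besselITerm ν z) := by
  have tendsto_shift (t : ℝ) : Tendsto (fun n : ℕ => (n : ℝ) + t) atTop atTop :=
    tendsto_atTop_add_const_right _ t tendsto_natCast_atTop_atTop
  have eventually_pos : ∀ᶠ n : ℕ in atTop, 0 < n + ν + 1 := by
    simpa only [add_assoc] using (tendsto_shift (ν + 1)).eventually_gt_atTop 0
  refine summable_of_ratio_test_tendsto_lt_one zero_lt_one
    (eventually_pos.mono fun n hn => (besselITerm_pos hz hn).ne') ?_
  have ratio_tendsto :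
      Tendsto (fun n : ℕ => (z / 2) ^ 2 / ((n + 1) * (n + ν + 1))) atTop (𝓝 0) := by
    simpa only [add_assoc] using
      ((tendsto_shift 1).atTop_mul_atTop₀ (tendsto_shift (ν + 1))).const_div_atTop ((z / 2) ^ 2)
  refine ratio_tendsto.congr' (eventually_pos.mono fun n hn => ?_)
  have norm_term_ne_zero : ‖besselITerm ν z n‖ ≠ 0 :=
    norm_ne_zero_iff.mpr (besselITerm_pos hz hn).ne'
  simp only [besselITerm_succ hz hn.ne', norm_mul, mul_div_cancel_right₀ _ norm_term_ne_zero]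
  exact (Real.norm_of_nonneg (by positivity)).symm

theorem hasSum_besselITerm (hz : 0 < z) (ν : ℝ) : HasSum (besselITerm ν z) (besselI ν z) :=
  (summable_besselITerm hz ν).hasSum

theorem hasSum_besselITerm_succ (hz : 0 < z) (ν : ℝ) :
    HasSum (fun n => besselITerm ν z (n + 1)) (besselI ν z - besselITerm ν z 0) := by
  simpa using (hasSum_nat_add_iff' 1).mpr (hasSum_besselITerm hz ν)

theorem rpow_mul_Gamma_mul_besselITerm_zero (hz : 0 < z) {ν : ℝ} (hν : 0 < ν) :
    (z / 2) ^ ν * Real.Gamma ν * besselITerm (ν - 1) z 0 = (z / 2) ^ (2 * ν - 1) := by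
  have hGamma := (Real.Gamma_pos_of_pos hν).ne'
  have rpow_split : (z / 2) ^ (2 * ν - 1) = (z / 2) ^ ν * (z / 2) ^ (ν - 1) := by
    rw [← Real.rpow_add (half_pos hz)]
    ring_nf
  simp only [besselITerm, Nat.cast_zero, mul_zero, zero_add, Nat.factorial_zero, Nat.cast_one,
    one_mul, sub_add_cancel]
  rw [rpow_split]
  field_simp

end Bessel

section ContinuousBinomial

/-- The `n`-th coefficient of the power series in `s * (x - s)` defining `cbinom x s`. -/
noncomputable def cbinomCoeff (x : ℝ) (n : ℕ) : ℝ :=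
  2 / (n ! : ℝ) ^ 2 + x / (n ! * (n + 1)!)

theorem cbinom_half_add (x s : ℝ) :
    cbinom x (x / 2 + s) = ∑' n, ((x / 2) ^ 2 - s ^ 2) ^ n * cbinomCoeff x n := by
  have h : (x / 2 + s) * (x - (x / 2 + s)) = (x / 2) ^ 2 - s ^ 2 := by ring
  simp only [cbinom, cbinomCoeff, h]

theorem norm_cbinomCoeff_le (x : ℝ) (n : ℕ) : ‖cbinomCoeff x n‖ ≤ (2 + |x|) / n ! := by
  have one_le_factorial (m : ℕ) : (1 : ℝ) ≤ m ! := mod_cast m.factorial_pos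
  calc ‖cbinomCoeff x n‖
      ≤ ‖2 / (n ! : ℝ) ^ 2‖ + ‖x / (n ! * (n + 1)!)‖ := norm_add_le _ _
    _ = 2 / (n ! * n !) + |x| / (n ! * (n + 1)!) := by simp [sq]
    _ ≤ 2 / n ! + |x| / n ! := by
        gcongr <;> exact le_mul_of_one_le_right (by positivity) (one_le_factorial _)
    _ = (2 + |x|) / n ! := by ring

theorem summable_pow_mul_cbinomCoeff (x r : ℝ) : Summable fun n => r ^ n * cbinomCoeff x n := by
  refine .of_norm_bounded ((Real.summable_pow_div_factorial |r|).mul_right (2 + |x|)) fun n => ?_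
  calc ‖r ^ n * cbinomCoeff x n‖
      = |r| ^ n * ‖cbinomCoeff x n‖ := by rw [norm_mul, norm_pow, Real.norm_eq_abs r]
    _ ≤ |r| ^ n * ((2 + |x|) / n !) := by gcongr; exact norm_cbinomCoeff_le x n
    _ = |r| ^ n / n ! * (2 + |x|) := by ring

theorem hasSum_integral_pow_mul_cbinom (x : ℝ) (k : ℕ) :
    HasSum (fun n => (∫ s in (-(x / 2))..(x / 2), s ^ k * ((x / 2) ^ 2 - s ^ 2) ^ n) *
        cbinomCoeff x n)
      (∫ s in (-(x / 2))..(x / 2), s ^ k * cbinom x (x / 2 + s)) := by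
  simp only [cbinom_half_add]
  exact hasSum_intervalIntegral_mul_tsum_pow (Continuous.intervalIntegrable (by fun_prop) _ _)
    (by fun_prop) (summable_pow_mul_cbinomCoeff x)

theorem integral_pow_mul_sq_sub_sq_pow_mul_cbinomCoeff {x : ℝ} (hx : 0 < x) {k : ℕ} (hk : Even k)
    (n : ℕ) :
    (∫ s in (-(x / 2))..(x / 2), s ^ k * ((x / 2) ^ 2 - s ^ 2) ^ n) * cbinomCoeff x n =
      2 * ((x / 2) ^ ((k + 1 : ℝ) / 2) * Real.Gamma ((k + 1) / 2)) *
        (besselITerm ((k + 1) / 2) x n + besselITerm ((k - 1) / 2) x (n + 1)) := by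
  have rpow_split : (x / 2) ^ (2 * n + k + 1) =
      (x / 2) ^ ((k + 1 : ℝ) / 2) * (x / 2) ^ (2 * (n : ℝ) + (k + 1) / 2) := by
    rw [← Real.rpow_natCast, ← Real.rpow_add (half_pos hx)]
    push_cast
    ring_nf
  have rpow_succ : (x / 2) ^ (2 * ((n + 1 : ℕ) : ℝ) + (k - 1) / 2) =
      (x / 2) * (x / 2) ^ (2 * (n : ℝ) + (k + 1) / 2) := by
    rw [← Real.rpow_one_add' (half_pos hx).le (by positivity)]
    push_cast
    ring_nf
  have hGamma_arg : ((n + 1 : ℕ) + (k - 1) / 2 + 1 : ℝ) = n + (k + 1) / 2 + 1 := by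
    push_cast
    ring
  rw [integral_pow_mul_sq_sub_sq_pow _ hk, rpow_split, cbinomCoeff, besselITerm, besselITerm,
    rpow_succ, hGamma_arg]
  field_simp

theorem integral_pow_mul_cbinom_of_odd (x : ℝ) {k : ℕ} (hk : Odd k) :
    ∫ s in (-(x / 2))..(x / 2), s ^ k * cbinom x (x / 2 + s) = 0 :=
  intervalIntegral_eq_zero_of_odd
    (fun s => by simp only [cbinom_half_add, neg_sq, hk.neg_pow, neg_mul]) _

theorem integral_pow_mul_cbinom_of_even {x : ℝ} (hx : 0 < x) {k : ℕ} (hk : Even k) :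
    ∫ s in (-(x / 2))..(x / 2), s ^ k * cbinom x (x / 2 + s) =
      2 * ((x / 2) ^ (((k : ℝ) + 1) / 2) * Real.Gamma (((k : ℝ) + 1) / 2) *
          (besselI (((k : ℝ) + 1) / 2) x + besselI (((k : ℝ) - 1) / 2) x) -
        (x / 2) ^ k) := by
  have zeroth_term : (x / 2) ^ ((k + 1 : ℝ) / 2) * Real.Gamma ((k + 1) / 2) *
      besselITerm ((k - 1) / 2) x 0 = (x / 2) ^ k := by
    convert rpow_mul_Gamma_mul_besselITerm_zero hx (ν := (k + 1 : ℝ) / 2) (by positivity) using 2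
    · ring_nf
    · rw [← Real.rpow_natCast]
      ring_nf
  have moment_series := hasSum_integral_pow_mul_cbinom x k
  simp only [integral_pow_mul_sq_sub_sq_pow_mul_cbinomCoeff hx hk] at moment_series
  have bessel_series := ((hasSum_besselITerm hx ((k + 1) / 2)).add
    (hasSum_besselITerm_succ hx ((k - 1) / 2))).mul_left
    (2 * ((x / 2) ^ ((k + 1 : ℝ) / 2) * Real.Gamma ((k + 1) / 2)))
  rw [moment_series.unique bessel_series, ← zeroth_term]
  ring

end ContinuousBinomial

theorem symmetric_cbinom_moments (x : ℝ) (hx : 0 < x) (k : ℕ) :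
    (Odd k → (∫ s in (-(x / 2))..(x / 2), s ^ k * cbinom x (x / 2 + s)) = 0) ∧
      (Even k →
        (1 / (2 * (Real.exp x - 1))) *
            ∫ s in (-(x / 2))..(x / 2), s ^ k * cbinom x (x / 2 + s) =
          (1 / (Real.exp x - 1)) *
            ((x / 2) ^ (((k : ℝ) + 1) / 2) * Real.Gamma (((k : ℝ) + 1) / 2) *
                (besselI (((k : ℝ) + 1) / 2) x + besselI (((k : ℝ) - 1) / 2) x) -
              (x / 2) ^ k)) := by
  refine ⟨integral_pow_mul_cbinom_of_odd x, fun hk => ?_⟩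
  rw [integral_pow_mul_cbinom_of_even hx hk, one_div_mul_eq_div, one_div_mul_eq_div,
    mul_div_mul_left _ _ two_ne_zero]
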